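/- Let (W, S) be a Coxeter system of finite rank and let A be a subset of W. Suppose w W_J w⁻¹ is a parabolic subgroup containing A such that |J| is minimal among all parabolic subgroups x W_K x⁻¹ containing A (minimal with respect to |K|). Then w W_J w⁻¹ is contained in every parabolic subgroup of W containing A; equivalently, w W_J w⁻¹ equals the parabolic closure Pc(A) of A. -/

import Mathlib

/-!
If `d` is of minimal length in its double coset `W_J d W_K`, then `W_J ∩ d W_K d⁻¹ = W_L`, where
`L` consists of the `j ∈ J` for which `d⁻¹ s_j d` is a simple reflection `s_k` with `k ∈ K`
(Kilmoyer). Hence any two parabolic subgroups `w W_J w⁻¹` and `x W_K x⁻¹` intersect in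
`y W_L y⁻¹` for some `L ⊆ J` and some `y` with `y W_J y⁻¹ = w W_J w⁻¹`. If both contain `A` and `J`
is minimal, then `L = J`, so the intersection is all of `w W_J w⁻¹`.

Kilmoyer's theorem rests on the behaviour of inversions under products: if the reflection `t` is
not a left inversion of `u`, then it is a left inversion of `u v` exactly when `u⁻¹ t u` is one of
`v`. This is the cocycle rule for the sign `ε(w, t) = ±1` that is `-1` exactly at the left
inversions `t` of `w`; the sign exists because the left inversion sequence of the relator
`(s_i s_j) ^ M i j` lists each of its reflections an even number of times.
-/

namespace CoxeterParabolic

open CoxeterSystem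
open scoped Pointwise

variable {B W : Type*} [Group W] {M : CoxeterMatrix B} (cs : CoxeterSystem M W)

/-! ### Inversions of a product -/

/-- The action of a group `W` on the functions `W → ℤˣ` through conjugation of the argument. -/
def conjSignAut (W : Type*) [Group W] : W →* MulAut (W → ℤˣ) :=
  mulAutArrow.comp ConjAct.toConjAct.toMonoidHom

theorem conjSignAut_apply (u : W) (f : W → ℤˣ) (t : W) :
    conjSignAut W u f t = f (u⁻¹ * t * u) := by
  change f ((ConjAct.toConjAct u)⁻¹ • t) = _
  simp [ConjAct.smul_def]

open Classical in
/-- The lift of the simple reflection `s_i` to `(W → ℤˣ) ⋊ W`. The first component is the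
cocycle `ε(s_i, ·)`, defined on all of `W` although only its values at reflections matter. -/
noncomputable def signedSimple (i : B) : (W → ℤˣ) ⋊[conjSignAut W] W :=
  ⟨Pi.mulSingle (cs.simple i) (-1), cs.simple i⟩

open Classical in
theorem prod_map_signedSimple (ω : List B) :
    (ω.map (signedSimple cs)).prod =
      ⟨fun t => (-1) ^ (cs.leftInvSeq ω).count t, cs.wordProd ω⟩ := by
  induction ω with
  | nil => rfl
  | cons i ω ih =>
    rw [List.map_cons, List.prod_cons, ih]
    refine SemidirectProduct.ext (funext fun t => ?_) (cs.wordProd_cons i ω).symm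
    have hcount : ((cs.leftInvSeq ω).map (MulAut.conj (cs.simple i))).count t =
        (cs.leftInvSeq ω).count ((cs.simple i)⁻¹ * t * cs.simple i) := by
      conv_lhs => rw [show t = MulAut.conj (cs.simple i) ((cs.simple i)⁻¹ * t * cs.simple i) by
        simp [mul_assoc]]
      exact List.count_map_of_injective _ _ (MulAut.conj (cs.simple i)).injective _
    simp only [SemidirectProduct.mul_left, Pi.mul_apply, signedSimple, conjSignAut_apply,
      Pi.mulSingle_apply, leftInvSeq, List.count_cons, hcount, pow_add, beq_iff_eq]
    rw [mul_comm, eq_comm (a := cs.simple i)]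
    split_ifs <;> simp

theorem prod_map_alternatingWord_two_mul {G : Type*} [Monoid G] (f : B → G) (i j : B) (m : ℕ) :
    ((alternatingWord i j (2 * m)).map f).prod = (f i * f j) ^ m := by
  induction m with
  | zero => simp [alternatingWord]
  | succ m ih =>
    rw [mul_add_one, alternatingWord_succ, alternatingWord_succ, pow_succ, ← ih]
    simp

theorem wordProd_alternatingWord_add_two_mul (i j : B) (k : ℕ) :
    cs.wordProd (alternatingWord j i (2 * (k + M i j) + 1)) =
      cs.wordProd (alternatingWord j i (2 * k + 1)) := by
  rw [prod_alternatingWord_eq_mul_pow, prod_alternatingWord_eq_mul_pow,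
    show (2 * (k + M i j) + 1) / 2 = k + M i j by omega,
    show (2 * k + 1) / 2 = k by omega, pow_add, cs.simple_mul_simple_pow', mul_one]
  simp

theorem exists_leftInvSeq_alternatingWord_eq_append_self (i j : B) :
    ∃ l : List W, cs.leftInvSeq (alternatingWord i j (2 * M i j)) = l ++ l := by
  refine ⟨List.ofFn fun k : Fin (M i j) => cs.wordProd (alternatingWord j i (2 * k + 1)),
    List.ext_getElem (by simp [two_mul]) fun k hk _ => ?_⟩
  rw [length_leftInvSeq, length_alternatingWord] at hk
  rw [getElem_leftInvSeq_alternatingWord cs i j _ k hk, List.getElem_append]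
  split_ifs with hlt
  · simp
  · rw [List.length_ofFn, not_lt] at hlt
    simp [← wordProd_alternatingWord_add_two_mul cs i j (k - M i j), Nat.sub_add_cancel hlt]

theorem isLiftable_signedSimple : M.IsLiftable (signedSimple cs) := by
  classical
  intro i j
  obtain ⟨l, hl⟩ := exists_leftInvSeq_alternatingWord_eq_append_self cs i j
  rw [← prod_map_alternatingWord_two_mul, prod_map_signedSimple, hl]
  refine SemidirectProduct.ext (funext fun t => ?_) ?_
  · simp [← two_mul, pow_mul]
  · simp [wordProd, prod_map_alternatingWord_two_mul]

/-- The sign `ε(w, t)`, the value at `t` of the cocycle `W → (W → ℤˣ)` that sends `s_i` to the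
function which is `-1` at `s_i` and `1` elsewhere. For a reflection `t` it is `-1` exactly if `t` is
a left inversion of `w`. -/
noncomputable def inversionSign (w t : W) : ℤˣ :=
  (cs.lift ⟨signedSimple cs, isLiftable_signedSimple cs⟩ w).left t

open Classical in
theorem lift_signedSimple_wordProd (ω : List B) :
    cs.lift ⟨signedSimple cs, isLiftable_signedSimple cs⟩ (cs.wordProd ω) =
      ⟨fun t => (-1) ^ (cs.leftInvSeq ω).count t, cs.wordProd ω⟩ := by
  rw [← prod_map_signedSimple, wordProd, map_list_prod, List.map_map]
  congr 2
  ext1 i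
  exact cs.lift_apply_simple _ i

open Classical in
theorem inversionSign_wordProd (ω : List B) (t : W) :
    inversionSign cs (cs.wordProd ω) t = (-1) ^ (cs.leftInvSeq ω).count t := by
  rw [inversionSign, lift_signedSimple_wordProd]

theorem inversionSign_mul (u v t : W) :
    inversionSign cs (u * v) t = inversionSign cs u t * inversionSign cs v (u⁻¹ * t * u) := by
  obtain ⟨ω, rfl⟩ := cs.wordProd_surjective u
  rw [inversionSign, map_mul, SemidirectProduct.mul_left, Pi.mul_apply,
    lift_signedSimple_wordProd, conjSignAut_apply]
  simp only [inversionSign, lift_signedSimple_wordProd]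

theorem inversionSign_one (t : W) : inversionSign cs 1 t = 1 := by
  simpa using inversionSign_wordProd cs [] t

theorem inversionSign_simple_self (i : B) : inversionSign cs (cs.simple i) (cs.simple i) = -1 := by
  simpa using inversionSign_wordProd cs [i] (cs.simple i)

theorem inversionSign_self {t : W} (ht : cs.IsReflection t) : inversionSign cs t t = -1 := by
  obtain ⟨u, i, rfl⟩ := ht
  have cancel : inversionSign cs u (u * cs.simple i * u⁻¹) *
      inversionSign cs u⁻¹ (cs.simple i) = 1 := by
    rw [← inversionSign_one cs (u * cs.simple i * u⁻¹), ← mul_inv_cancel u, inversionSign_mul]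
    simp [mul_assoc]
  have hconj : u⁻¹ * (u * cs.simple i * u⁻¹) * u = cs.simple i := by group
  have hconj' : (u * cs.simple i)⁻¹ * (u * cs.simple i * u⁻¹) * (u * cs.simple i) =
      cs.simple i := by group
  rw [inversionSign_mul, inversionSign_mul, hconj, hconj', inversionSign_simple_self,
    mul_right_comm, cancel, one_mul]

theorem mem_leftInvSeq_of_inversionSign_eq_neg_one {ω : List B} {t : W}
    (h : inversionSign cs (cs.wordProd ω) t = -1) : t ∈ cs.leftInvSeq ω := by
  classical
  by_contra hmem
  rw [inversionSign_wordProd, List.count_eq_zero_of_not_mem hmem, pow_zero] at h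
  exact absurd h (by decide)

theorem isLeftInversion_of_inversionSign_eq_neg_one {w t : W} (h : inversionSign cs w t = -1) :
    cs.IsLeftInversion w t := by
  obtain ⟨ω, hω, rfl⟩ := cs.exists_isReduced w
  exact cs.isLeftInversion_of_mem_leftInvSeq hω (mem_leftInvSeq_of_inversionSign_eq_neg_one cs h)

theorem inversionSign_eq_neg_one_iff {w t : W} (ht : cs.IsReflection t) :
    inversionSign cs w t = -1 ↔ cs.IsLeftInversion w t := by
  refine ⟨isLeftInversion_of_inversionSign_eq_neg_one cs, fun h => ?_⟩
  by_contra hsign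
  have hone : inversionSign cs w t = 1 := (Int.units_eq_one_or _).resolve_right hsign
  have htw : inversionSign cs (t * w) t = -1 := by
    simp [inversionSign_mul, inversionSign_self cs ht, hone]
  exact ht.isLeftInversion_mul_right_iff.1 (isLeftInversion_of_inversionSign_eq_neg_one cs htw) h

theorem isLeftInversion_mul_iff_of_not_isLeftInversion {u t : W} (v : W) (ht : cs.IsReflection t)
    (hu : ¬ cs.IsLeftInversion u t) :
    cs.IsLeftInversion (u * v) t ↔ cs.IsLeftInversion v (u⁻¹ * t * u) := by
  have ht' : cs.IsReflection (u⁻¹ * t * u) := by simpa using ht.conj u⁻¹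
  have hsign : inversionSign cs u t = 1 :=
    (Int.units_eq_one_or _).resolve_right (mt (inversionSign_eq_neg_one_iff cs ht).1 hu)
  rw [← inversionSign_eq_neg_one_iff cs ht, ← inversionSign_eq_neg_one_iff cs ht',
    inversionSign_mul, hsign, one_mul]

theorem strong_exchange {ω : List B} {t : W} (h : cs.IsLeftInversion (cs.wordProd ω) t) :
    ∃ k < ω.length, t * cs.wordProd ω = cs.wordProd (ω.eraseIdx k) := by
  have hmem := mem_leftInvSeq_of_inversionSign_eq_neg_one cs
    ((inversionSign_eq_neg_one_iff cs h.1).2 h)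
  obtain ⟨k, hk, rfl⟩ := List.mem_iff_getElem.1 hmem
  refine ⟨k, by simpa using hk, ?_⟩
  rw [← cs.getD_leftInvSeq_mul_wordProd, List.getD_eq_getElem _ _ hk]

/-! ### Special subgroups and minimal coset representatives -/

/-- The special subgroup `W_J`, generated by the simple reflections with index in `J`. -/
abbrev specialSubgroup (J : Set B) : Subgroup W := Subgroup.closure (cs.simple '' J)

variable {J K : Set B} {d : W}

theorem simple_mem_specialSubgroup {j : B} (hj : j ∈ J) : cs.simple j ∈ specialSubgroup cs J :=
  Subgroup.subset_closure ⟨j, hj, rfl⟩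

theorem wordProd_mem_specialSubgroup {ω : List B} (hω : ∀ j ∈ ω, j ∈ J) :
    cs.wordProd ω ∈ specialSubgroup cs J :=
  Subgroup.list_prod_mem _ (by simpa using fun j hj => simple_mem_specialSubgroup cs (hω j hj))

theorem exists_isReduced_simple_mul_wordProd {ω : List B} (hω : cs.IsReduced ω)
    (hωJ : ∀ i ∈ ω, i ∈ J) {j : B} (hj : j ∈ J) :
    ∃ ω' : List B, cs.IsReduced ω' ∧ (∀ i ∈ ω', i ∈ J) ∧
      cs.simple j * cs.wordProd ω = cs.wordProd ω' := by
  by_cases hdesc : cs.IsLeftDescent (cs.wordProd ω) j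
  · obtain ⟨k, hk, hprod⟩ :=
      strong_exchange cs ((cs.isLeftInversion_simple_iff_isLeftDescent _ _).2 hdesc)
    refine ⟨ω.eraseIdx k, ?_, fun i hi => hωJ i (List.mem_of_mem_eraseIdx hi), hprod⟩
    have hlen := cs.isLeftDescent_iff.1 hdesc
    have herase := List.length_eraseIdx_add_one hk
    rw [hprod, hω.eq] at hlen
    rw [CoxeterSystem.IsReduced]
    omega
  · refine ⟨j :: ω, ?_, by simpa [hj] using hωJ, (cs.wordProd_cons j ω).symm⟩
    rw [CoxeterSystem.IsReduced, cs.wordProd_cons, cs.not_isLeftDescent_iff.1 hdesc, hω.eq,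
      List.length_cons]

theorem exists_isReduced_of_mem_specialSubgroup {u : W} (hu : u ∈ specialSubgroup cs J) :
    ∃ ω : List B, cs.IsReduced ω ∧ (∀ j ∈ ω, j ∈ J) ∧ u = cs.wordProd ω := by
  induction hu using Subgroup.closure_induction_left with
  | one => exact ⟨[], by simp [CoxeterSystem.IsReduced], by simp, by simp⟩
  | mul_left _ hs _ _ ih =>
    obtain ⟨j, hj, rfl⟩ := hs
    obtain ⟨ω, hω, hωJ, rfl⟩ := ih
    exact exists_isReduced_simple_mul_wordProd cs hω hωJ hj
  | inv_mul_cancel _ hs _ _ ih =>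
    obtain ⟨j, hj, rfl⟩ := hs
    obtain ⟨ω, hω, hωJ, rfl⟩ := ih
    rw [cs.inv_simple]
    exact exists_isReduced_simple_mul_wordProd cs hω hωJ hj

@[elab_as_elim]
theorem specialSubgroup_induction {p : (u : W) → u ∈ specialSubgroup cs J → Prop}
    (one : p 1 (one_mem _))
    (simple_mul : ∀ (j : B) (hj : j ∈ J) (u : W) (hu : u ∈ specialSubgroup cs J),
      ¬ cs.IsLeftDescent u j → p u hu →
        p (cs.simple j * u) (mul_mem (simple_mem_specialSubgroup cs hj) hu))
    {u : W} (hu : u ∈ specialSubgroup cs J) : p u hu := by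
  obtain ⟨ω, hω, hωJ, rfl⟩ := exists_isReduced_of_mem_specialSubgroup cs hu
  induction ω with
  | nil => simpa using one
  | cons j ω ih =>
    have hω' : cs.IsReduced ω := by simpa using hω.drop 1
    have hωJ' : ∀ i ∈ ω, i ∈ J := fun i hi => hωJ i (List.mem_cons_of_mem _ hi)
    have hu' := wordProd_mem_specialSubgroup cs hωJ'
    simp only [cs.wordProd_cons]
    refine simple_mul j (hωJ j List.mem_cons_self) _ hu' ?_ (ih hω' hωJ' hu')
    rw [cs.not_isLeftDescent_iff, ← cs.wordProd_cons, hω.eq, hω'.eq, List.length_cons]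

theorem exists_eq_simple_of_mem_specialSubgroup {u : W} (hu : u ∈ specialSubgroup cs J)
    (hlen : cs.length u = 1) : ∃ j ∈ J, u = cs.simple j := by
  obtain ⟨ω, hω, hωJ, rfl⟩ := exists_isReduced_of_mem_specialSubgroup cs hu
  obtain ⟨j, rfl⟩ := List.length_eq_one_iff.1 (hω.eq.symm.trans hlen)
  exact ⟨j, hωJ j List.mem_cons_self, cs.wordProd_singleton j⟩

theorem mem_specialSubgroup_of_isLeftInversion {u t : W} (hu : u ∈ specialSubgroup cs J)
    (ht : cs.IsLeftInversion u t) : t ∈ specialSubgroup cs J := by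
  obtain ⟨ω, -, hωJ, rfl⟩ := exists_isReduced_of_mem_specialSubgroup cs hu
  obtain ⟨k, -, hprod⟩ := strong_exchange cs ht
  rw [eq_mul_inv_of_mul_eq hprod]
  exact mul_mem (wordProd_mem_specialSubgroup cs fun j hj => hωJ j (List.mem_of_mem_eraseIdx hj))
    (inv_mem hu)

/-- `d` has minimal length in the coset `W_J d`. Minimality in a coset `d W_K` is expressed as
`IsMinimalCosetRep cs K d⁻¹`. -/
def IsMinimalCosetRep (J : Set B) (d : W) : Prop :=
  ∀ a ∈ specialSubgroup cs J, cs.length d ≤ cs.length (a * d)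

variable {cs}

theorem IsMinimalCosetRep.length_mul (hd : IsMinimalCosetRep cs J d) {u : W}
    (hu : u ∈ specialSubgroup cs J) : cs.length (u * d) = cs.length u + cs.length d := by
  induction hu using specialSubgroup_induction with
  | one => simp
  | simple_mul j hj u hu hdesc ih =>
    have hdesc' : ¬ cs.IsLeftDescent (u * d) j := by
      rw [← isLeftInversion_simple_iff_isLeftDescent] at hdesc ⊢
      rw [isLeftInversion_mul_iff_of_not_isLeftInversion cs d (cs.isReflection_simple j) hdesc]
      exact fun h => h.2.not_ge
        (hd _ (mul_mem (mul_mem (inv_mem hu) (simple_mem_specialSubgroup cs hj)) hu))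
    rw [mul_assoc, cs.not_isLeftDescent_iff.1 hdesc', cs.not_isLeftDescent_iff.1 hdesc, ih]
    omega

theorem IsMinimalCosetRep.length_mul_right (hd : IsMinimalCosetRep cs K d⁻¹) {v : W}
    (hv : v ∈ specialSubgroup cs K) : cs.length (d * v) = cs.length d + cs.length v := by
  have h := hd.length_mul (inv_mem hv)
  rwa [← mul_inv_rev, cs.length_inv, cs.length_inv, cs.length_inv, add_comm] at h

theorem IsMinimalCosetRep.not_isLeftDescent (hd : IsMinimalCosetRep cs J d) {j : B} (hj : j ∈ J) :
    ¬ cs.IsLeftDescent d j :=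
  (hd _ (simple_mem_specialSubgroup cs hj)).not_gt

theorem exists_isMinimalCosetRep_mul_mul (cs : CoxeterSystem M W) (J K : Set B) (x : W) :
    ∃ a ∈ specialSubgroup cs J, ∃ b ∈ specialSubgroup cs K,
      IsMinimalCosetRep cs J (a * x * b) ∧ IsMinimalCosetRep cs K (a * x * b)⁻¹ := by
  let len (p : specialSubgroup cs J × specialSubgroup cs K) : ℕ := cs.length (p.1 * x * p.2)
  obtain ⟨⟨⟨a, ha⟩, ⟨b, hb⟩⟩, hmin⟩ : ∃ p, ∀ q, len p ≤ len q :=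
    ⟨Function.argmin len, fun q => Function.argmin_le len q⟩
  refine ⟨a, ha, b, hb, fun c hc => ?_, fun c hc => ?_⟩
  · simpa [len, mul_assoc] using hmin (⟨c * a, mul_mem hc ha⟩, ⟨b, hb⟩)
  · rw [cs.length_inv, ← cs.length_inv (c * _)]
    simpa [len, mul_assoc] using hmin (⟨a, ha⟩, ⟨b * c⁻¹, mul_mem hb (inv_mem hc)⟩)

/-! ### Intersections of parabolic subgroups -/

theorem exists_simple_mul_eq_mul_simple (hdJ : IsMinimalCosetRep cs J d)
    (hdK : IsMinimalCosetRep cs K d⁻¹) {j : B} (hj : j ∈ J) {v : W}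
    (hv : v ∈ specialSubgroup cs K) (hdesc : cs.IsLeftDescent (d * v) j) :
    ∃ k ∈ K, cs.simple j * d = d * cs.simple k := by
  have hdj := hdJ.not_isLeftDescent hj
  have hinv : cs.IsLeftInversion v (d⁻¹ * cs.simple j * d) := by
    rw [← isLeftInversion_simple_iff_isLeftDescent] at hdj hdesc
    exact (isLeftInversion_mul_iff_of_not_isLeftInversion cs v
      (cs.isReflection_simple j) hdj).1 hdesc
  have htK := mem_specialSubgroup_of_isLeftInversion cs hv hinv
  have hconj : d * (d⁻¹ * cs.simple j * d) = cs.simple j * d := by group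
  have hlen : cs.length (d⁻¹ * cs.simple j * d) = 1 := by
    have h := hdK.length_mul_right htK
    rw [hconj, cs.not_isLeftDescent_iff.1 hdj] at h
    omega
  obtain ⟨k, hk, htk⟩ := exists_eq_simple_of_mem_specialSubgroup cs htK hlen
  exact ⟨k, hk, by rw [← htk, hconj]⟩

theorem mem_specialSubgroup_of_conj_mem (hdJ : IsMinimalCosetRep cs J d)
    (hdK : IsMinimalCosetRep cs K d⁻¹) {u : W} (hu : u ∈ specialSubgroup cs J)
    (huK : d⁻¹ * u * d ∈ specialSubgroup cs K) :
    u ∈ specialSubgroup cs {j ∈ J | ∃ k ∈ K, cs.simple j * d = d * cs.simple k} := by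
  induction hu using specialSubgroup_induction with
  | one => exact one_mem _
  | simple_mul j hj u hu hdesc ih =>
    have hdesc' : cs.IsLeftDescent (d * (d⁻¹ * (cs.simple j * u) * d)) j := by
      have hju := hdJ.length_mul (mul_mem (simple_mem_specialSubgroup cs hj) hu)
      rw [cs.not_isLeftDescent_iff.1 hdesc] at hju
      have heq : d * (d⁻¹ * (cs.simple j * u) * d) = cs.simple j * u * d := by group
      rw [heq, IsLeftDescent, hju, mul_assoc, cs.simple_mul_simple_cancel_left,
        hdJ.length_mul hu]
      omega
    obtain ⟨k, hk, hjk⟩ := exists_simple_mul_eq_mul_simple hdJ hdK hj huK hdesc'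
    refine mul_mem (simple_mem_specialSubgroup cs ⟨hj, k, hk, hjk⟩) (ih ?_)
    have heq : d⁻¹ * u * d = cs.simple k * (d⁻¹ * (cs.simple j * u) * d) := by
      rw [eq_inv_mul_of_mul_eq hjk.symm]
      simp [mul_assoc]
    exact heq ▸ mul_mem (simple_mem_specialSubgroup cs hk) huK

theorem specialSubgroup_inf_conj_smul (hdJ : IsMinimalCosetRep cs J d)
    (hdK : IsMinimalCosetRep cs K d⁻¹) :
    specialSubgroup cs J ⊓ MulAut.conj d • specialSubgroup cs K =
      specialSubgroup cs {j ∈ J | ∃ k ∈ K, cs.simple j * d = d * cs.simple k} := by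
  apply le_antisymm
  · intro u hu
    rw [Subgroup.mem_inf, Subgroup.mem_pointwise_smul_iff_inv_smul_mem] at hu
    exact mem_specialSubgroup_of_conj_mem hdJ hdK hu.1 (by simpa using hu.2)
  · rw [specialSubgroup, Subgroup.closure_le]
    rintro _ ⟨j, ⟨hj, k, hk, hjk⟩, rfl⟩
    refine ⟨simple_mem_specialSubgroup cs hj, ?_⟩
    rw [eq_mul_inv_of_mul_eq hjk]
    exact Subgroup.smul_mem_pointwise_smul _ (MulAut.conj d) _ (simple_mem_specialSubgroup cs hk)

theorem exists_conj_smul_specialSubgroup_inf_eq (cs : CoxeterSystem M W) (w x : W)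
    (J K : Set B) :
    ∃ y : W, ∃ L ⊆ J,
      MulAut.conj y • specialSubgroup cs J = MulAut.conj w • specialSubgroup cs J ∧
      MulAut.conj w • specialSubgroup cs J ⊓ MulAut.conj x • specialSubgroup cs K =
        MulAut.conj y • specialSubgroup cs L := by
  obtain ⟨a, ha, b, hb, hdJ, hdK⟩ := exists_isMinimalCosetRep_mul_mul cs J K (w⁻¹ * x)
  have hJ : MulAut.conj (w * a⁻¹) • specialSubgroup cs J =
      MulAut.conj w • specialSubgroup cs J := by
    rw [map_mul, mul_smul, Subgroup.conj_smul_eq_self_of_mem (inv_mem ha)]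
  have hK : MulAut.conj (w * a⁻¹) • MulAut.conj (a * (w⁻¹ * x) * b) • specialSubgroup cs K =
      MulAut.conj x • specialSubgroup cs K := by
    have hx : w * a⁻¹ * (a * (w⁻¹ * x) * b) = x * b := by group
    rw [← mul_smul, ← map_mul, hx, map_mul, mul_smul, Subgroup.conj_smul_eq_self_of_mem hb]
  rw [← hJ, ← hK, ← Subgroup.smul_inf, specialSubgroup_inf_conj_smul hdJ hdK]
  exact ⟨_, _, Set.sep_subset _ _, rfl, rfl⟩

theorem conj_smul_specialSubgroup_le_of_minimal {A : Set W} {w : W}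
    (hA : A ⊆ (MulAut.conj w • specialSubgroup cs J : Subgroup W))
    (hmin : ∀ (y : W), ∀ L ⊆ J, A ⊆ (MulAut.conj y • specialSubgroup cs L : Subgroup W) → L = J)
    {x : W} (hx : A ⊆ (MulAut.conj x • specialSubgroup cs K : Subgroup W)) :
    MulAut.conj w • specialSubgroup cs J ≤ MulAut.conj x • specialSubgroup cs K := by
  obtain ⟨y, L, hLJ, hy, hinf⟩ := exists_conj_smul_specialSubgroup_inf_eq cs w x J K
  have hAL : A ⊆ (MulAut.conj y • specialSubgroup cs L : Subgroup W) := by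
    rw [← hinf]
    exact Set.subset_inter hA hx
  rw [hmin y L hLJ hAL, hy] at hinf
  exact inf_eq_left.1 hinf

end CoxeterParabolic

theorem minimal_parabolic_eq_parabolic_closure_general
    {B : Type*} {W : Type*} [Group W] {M : CoxeterMatrix B}
    (cs : CoxeterSystem M W) (A : Set W) (w : W) (J : Set B)
    (hA : A ⊆ ((Subgroup.closure (cs.simple '' J)).map (MulAut.conj w).toMonoidHom : Set W))
    (hmin : ∀ (x : W), ∀ K ⊆ J,
      A ⊆ ((Subgroup.closure (cs.simple '' K)).map (MulAut.conj x).toMonoidHom : Set W) →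
      K = J) :
    (∀ G : Subgroup W,
      (∃ (x : W) (K : Set B),
        G = (Subgroup.closure (cs.simple '' K)).map (MulAut.conj x).toMonoidHom) →
      A ⊆ (G : Set W) →
      (Subgroup.closure (cs.simple '' J)).map (MulAut.conj w).toMonoidHom ≤ G) ∧
    (Subgroup.closure (cs.simple '' J)).map (MulAut.conj w).toMonoidHom =
      sInf {G : Subgroup W |
        (∃ (x : W) (K : Set B),
          G = (Subgroup.closure (cs.simple '' K)).map (MulAut.conj x).toMonoidHom) ∧
        A ⊆ (G : Set W)} := by
  have hle {x : W} {K : Set B} :=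
    CoxeterParabolic.conj_smul_specialSubgroup_le_of_minimal (x := x) (K := K) hA hmin
  refine ⟨?_, le_antisymm (le_sInf ?_) (sInf_le ⟨⟨w, J, rfl⟩, hA⟩)⟩
  · rintro _ ⟨x, K, rfl⟩ hx
    exact hle hx
  · rintro _ ⟨⟨x, K, rfl⟩, hx⟩
    exact hle hx

/-- If `w W_J w⁻¹` is a parabolic subgroup containing `A ⊆ W` of minimal rank `|J|`
among all parabolic subgroups containing `A`, then `w W_J w⁻¹` is contained in every
parabolic subgroup containing `A`; equivalently it equals the parabolic closure of `A`. -/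
theorem minimal_parabolic_eq_parabolic_closure
    {B : Type*} [Finite B] {W : Type*} [Group W] {M : CoxeterMatrix B}
    (cs : CoxeterSystem M W) (A : Set W) (w : W) (J : Set B)
    (hA : A ⊆ ((Subgroup.closure (cs.simple '' J)).map (MulAut.conj w).toMonoidHom : Set W))
    (hmin : ∀ (x : W) (K : Set B),
      A ⊆ ((Subgroup.closure (cs.simple '' K)).map (MulAut.conj x).toMonoidHom : Set W) →
      J.ncard ≤ K.ncard) :
    (∀ G : Subgroup W,
      (∃ (x : W) (K : Set B),
        G = (Subgroup.closure (cs.simple '' K)).map (MulAut.conj x).toMonoidHom) →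
      A ⊆ (G : Set W) →
      (Subgroup.closure (cs.simple '' J)).map (MulAut.conj w).toMonoidHom ≤ G) ∧
    (Subgroup.closure (cs.simple '' J)).map (MulAut.conj w).toMonoidHom =
      sInf {G : Subgroup W |
        (∃ (x : W) (K : Set B),
          G = (Subgroup.closure (cs.simple '' K)).map (MulAut.conj x).toMonoidHom) ∧
        A ⊆ (G : Set W)} :=
  minimal_parabolic_eq_parabolic_closure_general cs A w J hA fun x K hKJ hK =>
    Set.eq_of_subset_of_ncard_le hKJ (hmin x K hK)
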